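/- Fix y ∈ 𝒴 and define φ₂(z) = zᵀv(y) − (1/m)·Σ_{c∈C, y'_c ∈ 𝒴_c} max_{y'' : y''_c = y'_c} zᵀv(y''). Then φ₂(z₁) − φ₂(z₂) ≤ √(2|C|)·‖z₁ − z₂‖₂ for all z₁, z₂ ∈ ℝ^m, i.e., the mean-of-max-marginals margin function is √(2|C|)-Lipschitz. -/

import Mathlib

open scoped BigOperators

/-- The clique-assignment indicator vectorization. -/
noncomputable def vec {ι S : Type*} [DecidableEq S] (C : Finset (Finset ι)) (y : ι → S) :
    (Σ c : {c // c ∈ C}, ({i // i ∈ c.1} → S)) → ℝ :=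
  fun p => if ∀ i : {i // i ∈ p.1.1}, y i.1 = p.2 i then 1 else 0

theorem sum_vec_eq {ι S : Type*} [Fintype ι] [Fintype S] [DecidableEq ι] [DecidableEq S]
    (C : Finset (Finset ι)) (y : ι → S) : ∑ p, vec C y p = (C.card : ℝ) := by
  rw [Fintype.sum_sigma]
  have h : ∀ c : {c // c ∈ C}, ∑ a : {i // i ∈ c.1} → S, vec C y ⟨c, a⟩ = 1 := by
    intro c
    rw [Finset.sum_eq_single (fun i : {i // i ∈ c.1} => y i.1)]
    · simp [vec]
    · intro b _ hb
      unfold vec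
      rw [if_neg]
      intro h
      exact hb (funext fun i => (h i).symm)
    · simp
  simp [h]

theorem vec_diff_le {ι S : Type*} [Fintype ι] [Fintype S] [DecidableEq ι] [DecidableEq S]
    (C : Finset (Finset ι)) (y y' : ι → S)
    (w : (Σ c : {c // c ∈ C}, ({i // i ∈ c.1} → S)) → ℝ) :
    ∑ p, w p * (vec C y p - vec C y' p) ≤
      Real.sqrt (2 * C.card) * Real.sqrt (∑ p, (w p) ^ 2) := by
  have h1 := Real.sum_mul_le_sqrt_mul_sqrt Finset.univ w (fun p => vec C y p - vec C y' p)
  have h2 : ∑ p, (vec C y p - vec C y' p) ^ 2 ≤ 2 * (C.card : ℝ) := by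
    calc ∑ p, (vec C y p - vec C y' p) ^ 2 ≤ ∑ p, (vec C y p + vec C y' p) := by
          apply Finset.sum_le_sum
          intro p _
          unfold vec
          split_ifs <;> norm_num
      _ = 2 * (C.card : ℝ) := by
          rw [Finset.sum_add_distrib, sum_vec_eq, sum_vec_eq]; ring
  calc _ ≤ _ := h1
    _ ≤ Real.sqrt (∑ p, (w p) ^ 2) * Real.sqrt (2 * C.card) := by gcongr
    _ = _ := mul_comm _ _

/-- φ₂(z) = zᵀv(y) − (1/m) Σ_{c, y'_c} max_{y'' : y''_c = y'_c} zᵀv(y'') is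
√(2|C|)-Lipschitz in Euclidean norm, where `m` is the total number of clique
assignments. -/
theorem phi2_lipschitz {ι S : Type*} [Fintype ι] [Fintype S] [DecidableEq ι] [DecidableEq S]
    (C : Finset (Finset ι)) (y : ι → S)
    (z₁ z₂ : (Σ c : {c // c ∈ C}, ({i // i ∈ c.1} → S)) → ℝ) :
    ((∑ p, z₁ p * vec C y p) -
        (1 / (Fintype.card (Σ c : {c // c ∈ C}, ({i // i ∈ c.1} → S)) : ℝ)) *
          ∑ c : {c // c ∈ C}, ∑ a : {i // i ∈ c.1} → S,
            ⨆ y'' : {y'' : ι → S // ∀ i : {i // i ∈ c.1}, y'' i.1 = a i},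
              ∑ p, z₁ p * vec C y''.1 p) -
      ((∑ p, z₂ p * vec C y p) -
        (1 / (Fintype.card (Σ c : {c // c ∈ C}, ({i // i ∈ c.1} → S)) : ℝ)) *
          ∑ c : {c // c ∈ C}, ∑ a : {i // i ∈ c.1} → S,
            ⨆ y'' : {y'' : ι → S // ∀ i : {i // i ∈ c.1}, y'' i.1 = a i},
              ∑ p, z₂ p * vec C y''.1 p) ≤
    Real.sqrt (2 * C.card) * Real.sqrt (∑ p, (z₁ p - z₂ p) ^ 2) := by
  set K := Real.sqrt (2 * C.card) * Real.sqrt (∑ p, (z₁ p - z₂ p) ^ 2) with hK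
  set d : ℝ := (∑ p, z₁ p * vec C y p) - ∑ p, z₂ p * vec C y p with hd
  have hK0 : 0 ≤ K := by positivity
  have key : ∀ (c : {c // c ∈ C}) (a : {i // i ∈ c.1} → S),
      (⨆ y'' : {y'' : ι → S // ∀ i : {i // i ∈ c.1}, y'' i.1 = a i},
        ∑ p, z₂ p * vec C y''.1 p) ≤
      (⨆ y'' : {y'' : ι → S // ∀ i : {i // i ∈ c.1}, y'' i.1 = a i},
        ∑ p, z₁ p * vec C y''.1 p) + (K - d) := by
    intro c a
    have : Nonempty {y'' : ι → S // ∀ i : {i // i ∈ c.1}, y'' i.1 = a i} :=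
      ⟨⟨fun i => if h : i ∈ c.1 then a ⟨i, h⟩ else y i, fun i => by simp⟩⟩
    apply ciSup_le
    intro y''
    have h1 := le_ciSup (f := fun y'' : {y'' : ι → S // ∀ i : {i // i ∈ c.1}, y'' i.1 = a i} =>
        ∑ p, z₁ p * vec C y''.1 p) (Set.finite_range _).bddAbove y''
    have h2 := vec_diff_le C y y''.1 (fun p => z₁ p - z₂ p)
    have h3 : ∑ p, (z₁ p - z₂ p) * (vec C y p - vec C y''.1 p) =
        d - ((∑ p, z₁ p * vec C y''.1 p) - ∑ p, z₂ p * vec C y''.1 p) := by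
      rw [hd, ← Finset.sum_sub_distrib, ← Finset.sum_sub_distrib, ← Finset.sum_sub_distrib]
      exact Finset.sum_congr rfl fun p _ => by ring
    rw [h3] at h2
    linarith
  have hsum := Finset.sum_le_sum fun (c : {c // c ∈ C}) (_ : c ∈ Finset.univ) =>
    Finset.sum_le_sum fun (a : {i // i ∈ c.1} → S) (_ : a ∈ Finset.univ) => key c a
  have hcard : ∑ c : {c // c ∈ C}, ∑ _a : {i // i ∈ c.1} → S, (K - d) =
      (Fintype.card (Σ c : {c // c ∈ C}, ({i // i ∈ c.1} → S)) : ℝ) * (K - d) := by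
    rw [← Fintype.sum_sigma (f := fun _ : (Σ c : {c // c ∈ C}, ({i // i ∈ c.1} → S)) => K - d)]
    rw [Finset.sum_const, nsmul_eq_mul, Finset.card_univ]
  simp only [Finset.sum_add_distrib] at hsum
  rw [hcard] at hsum
  generalize (∑ c : {c // c ∈ C}, ∑ a : {i // i ∈ c.1} → S,
            ⨆ y'' : {y'' : ι → S // ∀ i : {i // i ∈ c.1}, y'' i.1 = a i},
              ∑ p, z₁ p * vec C y''.1 p) = A at hsum ⊢
  generalize (∑ c : {c // c ∈ C}, ∑ a : {i // i ∈ c.1} → S,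
            ⨆ y'' : {y'' : ι → S // ∀ i : {i // i ∈ c.1}, y'' i.1 = a i},
              ∑ p, z₂ p * vec C y''.1 p) = B at hsum ⊢
  rcases isEmpty_or_nonempty (Σ c : {c // c ∈ C}, ({i // i ∈ c.1} → S)) with he | hne
  · simpa using hK0
  · have hm : (0 : ℝ) < (Fintype.card (Σ c : {c // c ∈ C}, ({i // i ∈ c.1} → S)) : ℝ) := by
      exact_mod_cast Fintype.card_pos
    generalize (Fintype.card (Σ c : {c // c ∈ C}, ({i // i ∈ c.1} → S)) : ℝ) = m at hsum hm ⊢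
    have h4 : 1 / m * B - 1 / m * A ≤ K - d := by
      rw [← mul_sub, one_div, inv_mul_le_iff₀ hm]
      linarith
    linarith
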